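/- arXiv:2009.12107 — 2 statements merged into one kernel-verified Lean document; each statement's English description precedes it below -/
import Mathlib

section
/- Let R be a commutative ring. Then SG_2(R) = SL_4(R): a matrix g ∈ GL_4(R) satisfies (i) g·S·g* is a Suslin matrix for every Suslin matrix S ∈ M_4(R) and (ii) l(g·S·g*) = l(S) for every Suslin matrix S ∈ M_4(R), if and only if det g = 1. Consequently Spin_6(R) ≅ SL_4(R). -/
open Matrix

noncomputable section

/-- Reindexing equivalence `Fin (2 ^ n) ⊕ Fin (2 ^ n) ≃ Fin (2 ^ (n + 1))`. -/
def pow2Equiv (n : ℕ) : Fin (2 ^ n) ⊕ Fin (2 ^ n) ≃ Fin (2 ^ (n + 1)) :=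
  finSumFinEquiv.trans (finCongr (by rw [pow_succ]; ring))

/-- The Suslin matrix `S_n(v, w)` of size `2 ^ n` associated to `v, w : Fin (n+1) → R`. -/
def sus (R : Type) [CommRing R] : (n : ℕ) → (Fin (n + 1) → R) → (Fin (n + 1) → R) →
    Matrix (Fin (2 ^ n)) (Fin (2 ^ n)) R
  | 0, v, _ => v 0 • 1
  | n + 1, v, w =>
      Matrix.reindex (pow2Equiv n) (pow2Equiv n)
        (Matrix.fromBlocks (v 0 • 1) (sus R n (v ∘ Fin.succ) (w ∘ Fin.succ))
          (-(sus R n (w ∘ Fin.succ) (v ∘ Fin.succ))ᵀ) (w 0 • 1))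

/-- The conjugate Suslin matrix `S̄_n(v, w) = S_n(w, v)ᵀ`. -/
def susBar (R : Type) [CommRing R] (n : ℕ) (v w : Fin (n + 1) → R) :
    Matrix (Fin (2 ^ n)) (Fin (2 ^ n)) R :=
  (sus R n w v)ᵀ

/-- Suslin's matrices `J_n`. -/
def Jmat (R : Type) [CommRing R] : (n : ℕ) → Matrix (Fin (2 ^ n)) (Fin (2 ^ n)) R
  | 0 => 1
  | n + 1 =>
      if Even (n + 1) then
        Matrix.reindex (pow2Equiv n) (pow2Equiv n)
          (Matrix.fromBlocks (Jmat R n) 0 0 (-(Jmat R n)))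
      else
        Matrix.reindex (pow2Equiv n) (pow2Equiv n)
          (Matrix.fromBlocks 0 (Jmat R n) (-(Jmat R n)) 0)

/-- The involution `M ↦ M* = J_n · Mᵀ · J_nᵀ`. -/
def invol (R : Type) [CommRing R] (n : ℕ) (M : Matrix (Fin (2 ^ n)) (Fin (2 ^ n)) R) :
    Matrix (Fin (2 ^ n)) (Fin (2 ^ n)) R :=
  Jmat R n * Mᵀ * (Jmat R n)ᵀ

/-- `φ(v, w) = [[0, S_n(v,w)], [S̄_n(v,w), 0]]` (note the shift: vectors in `R^{n+1}`,
matrices of size `2 ^ (n + 1)`). -/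
def phiMat (R : Type) [CommRing R] (n : ℕ) (v w : Fin (n + 1) → R) :
    Matrix (Fin (2 ^ (n + 1))) (Fin (2 ^ (n + 1))) R :=
  Matrix.reindex (pow2Equiv n) (pow2Equiv n)
    (Matrix.fromBlocks 0 (sus R n v w) (susBar R n v w) 0)

/-- The set of Suslin matrices of size `2 ^ m`. -/
def SuslinSet (R : Type) [CommRing R] (m : ℕ) : Set (Matrix (Fin (2 ^ m)) (Fin (2 ^ m)) R) :=
  {S | ∃ v w : Fin (m + 1) → R, S = sus R m v w}

/-- The image of the hyperbolic space `R^{m+1} ⊕ R^{m+1}` inside the Clifford algebra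
`M_{2^{m+1}}(R)`. -/
def PhiSet (R : Type) [CommRing R] (m : ℕ) :
    Set (Matrix (Fin (2 ^ (m + 1))) (Fin (2 ^ (m + 1))) R) :=
  {x | ∃ v w : Fin (m + 1) → R, x = phiMat R m v w}

/-- The block diagonal matrix `diag(g₁, g₂)`. -/
def diagBlock (R : Type) [CommRing R] (m : ℕ)
    (g₁ g₂ : Matrix (Fin (2 ^ m)) (Fin (2 ^ m)) R) :
    Matrix (Fin (2 ^ (m + 1))) (Fin (2 ^ (m + 1))) R :=
  Matrix.reindex (pow2Equiv m) (pow2Equiv m) (Matrix.fromBlocks g₁ 0 0 g₂)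

/-- `Spin_{2(m+1)}(R)`, as the set of pairs `(g₁, g₂)` such that `x = diag(g₁, g₂)`
satisfies `x · x* = 1` and conjugation by `x` maps the image of the hyperbolic space
onto itself. -/
def SpinPair (R : Type) [CommRing R] (m : ℕ) :
    Set (Matrix (Fin (2 ^ m)) (Fin (2 ^ m)) R × Matrix (Fin (2 ^ m)) (Fin (2 ^ m)) R) :=
  {p | IsUnit p.1 ∧ IsUnit p.2 ∧
    diagBlock R m p.1 p.2 * invol R (m + 1) (diagBlock R m p.1 p.2) = 1 ∧
    (fun y => diagBlock R m p.1 p.2 * y * (diagBlock R m p.1 p.2)⁻¹) '' PhiSet R m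
      = PhiSet R m}

/-- The group `G_m(R)` of `g ∈ GL_{2^m}(R)` such that `g · S · g*` is a Suslin matrix
for every Suslin matrix `S`. -/
def GSet (R : Type) [CommRing R] (m : ℕ) : Set (Matrix (Fin (2 ^ m)) (Fin (2 ^ m)) R) :=
  {g | IsUnit g ∧ ∀ S ∈ SuslinSet R m, g * S * invol R m g ∈ SuslinSet R m}

/-- The group `SG_m(R)` of `g ∈ G_m(R)` preserving the length `l(S(v,w)) = v ⬝ᵥ w`. -/
def SGSet (R : Type) [CommRing R] (m : ℕ) : Set (Matrix (Fin (2 ^ m)) (Fin (2 ^ m)) R) :=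
  {g | g ∈ GSet R m ∧ ∀ v w v' w' : Fin (m + 1) → R,
    g * sus R m v w * invol R m g = sus R m v' w' → v' ⬝ᵥ w' = v ⬝ᵥ w}

/-- The hyperbolic quadratic form `q(v, w) = v ⬝ᵥ w` on `R^n ⊕ R^n`. -/
def hypForm (R : Type) [CommRing R] (n : ℕ) :
    QuadraticForm R ((Fin n → R) × (Fin n → R)) :=
  LinearMap.BilinMap.toQuadraticMap
    (LinearMap.mk₂ R (fun x y => x.1 ⬝ᵥ y.2)
      (fun x x' y => by simp [add_dotProduct])
      (fun c x y => by simp [smul_dotProduct])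
      (fun x y y' => by simp [dotProduct_add])
      (fun x c y => by simp [dotProduct_smul]))

/-- `E_i = S_m(e_i, 0)`. -/
def Emat (R : Type) [CommRing R] (m : ℕ) (i : Fin (m + 1)) :
    Matrix (Fin (2 ^ m)) (Fin (2 ^ m)) R :=
  sus R m (Pi.single i 1) 0

/-- `F_i = S_m(0, e_i)`. -/
def Fmat (R : Type) [CommRing R] (m : ℕ) (i : Fin (m + 1)) :
    Matrix (Fin (2 ^ m)) (Fin (2 ^ m)) R :=
  sus R m 0 (Pi.single i 1)

/-!
A matrix `S ∈ M₄(R)` is a Suslin matrix exactly when `S * J₂` is alternating, and then the length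
of `S` is minus the Pfaffian of `S * J₂`. Since `J₂ᵀ * J₂ = 1`, the action `S ↦ g * S * g*` turns
into the congruence `A ↦ g * A * gᵀ` of `A = S * J₂`. Congruence preserves alternating matrices and
multiplies the Pfaffian by `det g`, so every `g` preserves Suslin matrices and scales their length
by `det g`.
-/

section Alternating

variable {R m n : Type*} [CommRing R] [Fintype n] [DecidableEq n]

lemma isAlt_toBilin'_iff {A : Matrix n n R} :
    (toBilin' A).IsAlt ↔ Aᵀ = -A ∧ ∀ i, A i i = 0 := by
  refine ⟨fun hA ↦ ⟨?_, fun i ↦ ?_⟩, fun ⟨hskew, hdiag⟩ x ↦ ?_⟩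
  · ext i j
    simpa only [toBilin'_single, transpose_apply, Matrix.neg_apply] using
      (hA.neg_eq (Pi.single i 1) (Pi.single j 1)).symm
  · simpa only [toBilin'_single] using hA (Pi.single i 1)
  · have hswap (i j : n) : A j i = -A i j := congrFun₂ hskew i j
    rw [toBilin'_apply, ← Fintype.sum_prod_type']
    refine Finset.sum_involution (fun p _ ↦ p.swap) (fun ⟨i, j⟩ _ ↦ ?_) (fun ⟨i, j⟩ _ hne heq ↦ ?_)
      (fun _ _ ↦ Finset.mem_univ _) (fun p _ ↦ p.swap_swap)
    · simp only [Prod.swap, hswap i j]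
      ring
    · obtain rfl : j = i := congrArg Prod.fst heq
      simp only [hdiag, mul_zero, zero_mul, ne_eq, not_true_eq_false] at hne

lemma isAlt_toBilin'_mul_mul_transpose [Fintype m] [DecidableEq m] {A : Matrix n n R}
    (hA : (toBilin' A).IsAlt) (g : Matrix m n R) : (toBilin' (g * A * gᵀ)).IsAlt := by
  have hcomp := toBilin'_comp A gᵀ gᵀ
  rw [transpose_transpose] at hcomp
  rw [← hcomp]
  exact fun x ↦ hA _

/-- The Pfaffian of an alternating `4 × 4` matrix, read off from its entries above the diagonal.
For other matrices the value is meaningless. -/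
def pfaffianFour (A : Matrix (Fin 4) (Fin 4) R) : R :=
  A 0 1 * A 2 3 - A 0 2 * A 1 3 + A 0 3 * A 1 2

lemma mul_mul_transpose_apply_of_isAlt {A : Matrix (Fin 4) (Fin 4) R}
    (hA : (toBilin' A).IsAlt) (g : Matrix m (Fin 4) R) (i j : m) :
    (g * A * gᵀ) i j =
      A 0 1 * (g i 0 * g j 1 - g i 1 * g j 0) + A 0 2 * (g i 0 * g j 2 - g i 2 * g j 0) +
      A 0 3 * (g i 0 * g j 3 - g i 3 * g j 0) + A 1 2 * (g i 1 * g j 2 - g i 2 * g j 1) +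
      A 1 3 * (g i 1 * g j 3 - g i 3 * g j 1) + A 2 3 * (g i 2 * g j 3 - g i 3 * g j 2) := by
  obtain ⟨hskew, hdiag⟩ := isAlt_toBilin'_iff.mp hA
  have hswap (k l : Fin 4) : A l k = -A k l := congrFun₂ hskew k l
  simp only [mul_apply, transpose_apply, Fin.sum_univ_four, hdiag, hswap 0 1, hswap 0 2, hswap 0 3,
    hswap 1 2, hswap 1 3, hswap 2 3]
  ring

lemma det_fin_four_eq_sum_minors (g : Matrix (Fin 4) (Fin 4) R) :
    g.det =
      (g 0 0 * g 1 1 - g 0 1 * g 1 0) * (g 2 2 * g 3 3 - g 2 3 * g 3 2) -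
      (g 0 0 * g 1 2 - g 0 2 * g 1 0) * (g 2 1 * g 3 3 - g 2 3 * g 3 1) +
      (g 0 0 * g 1 3 - g 0 3 * g 1 0) * (g 2 1 * g 3 2 - g 2 2 * g 3 1) +
      (g 0 1 * g 1 2 - g 0 2 * g 1 1) * (g 2 0 * g 3 3 - g 2 3 * g 3 0) -
      (g 0 1 * g 1 3 - g 0 3 * g 1 1) * (g 2 0 * g 3 2 - g 2 2 * g 3 0) +
      (g 0 2 * g 1 3 - g 0 3 * g 1 2) * (g 2 0 * g 3 1 - g 2 1 * g 3 0) := by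
  rw [det_succ_row_zero, Fin.sum_univ_four]
  simp only [det_fin_three, submatrix_apply, Fin.succAbove, Fin.reduceSucc, Fin.reduceCastSucc,
    Fin.reduceLT, reduceIte, Fin.isValue, Fin.coe_ofNat_eq_mod]
  ring

lemma pfaffianFour_mul_mul_transpose {A : Matrix (Fin 4) (Fin 4) R} (hA : (toBilin' A).IsAlt)
    (g : Matrix (Fin 4) (Fin 4) R) :
    pfaffianFour (g * A * gᵀ) = g.det * pfaffianFour A := by
  simp only [pfaffianFour, mul_mul_transpose_apply_of_isAlt hA]
  rw [det_fin_four_eq_sum_minors]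
  -- Up to sign, the coefficient of `A k l * A k' l'` expands the determinant of the columns
  -- `k, l, k', l'` of `g`, so it is `± g.det` for disjoint pairs and vanishes otherwise.
  ring

end Alternating

section Suslin

lemma reindex_pow2Equiv_zero_fromBlocks {α : Type*} (A B C D : Matrix (Fin 1) (Fin 1) α) :
    reindex (pow2Equiv 0) (pow2Equiv 0) (fromBlocks A B C D) =
      !![A 0 0, B 0 0; C 0 0, D 0 0] := by
  ext i j
  fin_cases i <;> fin_cases j <;> rfl

lemma reindex_pow2Equiv_one_fromBlocks {α : Type*} (A B C D : Matrix (Fin 2) (Fin 2) α) :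
    reindex (pow2Equiv 1) (pow2Equiv 1) (fromBlocks A B C D) =
      !![A 0 0, A 0 1, B 0 0, B 0 1;
         A 1 0, A 1 1, B 1 0, B 1 1;
         C 0 0, C 0 1, D 0 0, D 0 1;
         C 1 0, C 1 1, D 1 0, D 1 1] := by
  ext i j
  fin_cases i <;> fin_cases j <;> rfl

variable {R : Type} [CommRing R]

lemma sus_one (v w : Fin 2 → R) : sus R 1 v w = !![v 0, v 1; -w 1, w 0] := by
  rw [sus, reindex_pow2Equiv_zero_fromBlocks]
  simp [sus]

lemma sus_two (v w : Fin 3 → R) :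
    sus R 2 v w =
      !![v 0, 0, v 1, v 2;
         0, v 0, -w 2, w 1;
         -w 1, v 2, w 0, 0;
         -w 2, -v 1, 0, w 0] := by
  rw [sus, sus_one, sus_one, reindex_pow2Equiv_one_fromBlocks]
  simp

lemma Jmat_one : Jmat R 1 = !![0, 1; -1, 0] := by
  rw [Jmat, if_neg (by decide), reindex_pow2Equiv_zero_fromBlocks]
  simp [Jmat]

lemma Jmat_two :
    Jmat R 2 =
      !![0, 1, 0, 0;
         -1, 0, 0, 0;
         0, 0, 0, -1;
         0, 0, 1, 0] := by
  rw [Jmat, if_pos (by decide), Jmat_one, reindex_pow2Equiv_one_fromBlocks]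
  simp

lemma Jmat_mul_transpose (n : ℕ) : Jmat R n * (Jmat R n)ᵀ = 1 := by
  induction n with
  | zero => simp [Jmat]
  | succ n ih =>
    rw [Jmat]
    split_ifs <;> simp [fromBlocks_transpose, fromBlocks_multiply, ih]

lemma isUnit_Jmat (n : ℕ) : IsUnit (Jmat R n) :=
  IsUnit.of_mul_eq_one _ (Jmat_mul_transpose n)

lemma mul_mul_invol_mul_Jmat {n : ℕ} (g S : Matrix (Fin (2 ^ n)) (Fin (2 ^ n)) R) :
    g * S * invol R n g * Jmat R n = g * (S * Jmat R n) * gᵀ := by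
  have hJ : (Jmat R n)ᵀ * Jmat R n = 1 := mul_eq_one_comm.mp (Jmat_mul_transpose n)
  simp only [invol, Matrix.mul_assoc, hJ, Matrix.mul_one]

lemma sus_two_mul_Jmat (v w : Fin 3 → R) :
    sus R 2 v w * Jmat R 2 =
      !![0, v 0, v 2, -v 1;
         -v 0, 0, w 1, w 2;
         -v 2, -w 1, 0, -w 0;
         v 1, -w 2, w 0, 0] := by
  rw [sus_two, Jmat_two]
  ext i j
  fin_cases i <;> fin_cases j <;> simp [mul_apply, Fin.sum_univ_four]

lemma pfaffianFour_sus_two_mul_Jmat (v w : Fin 3 → R) :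
    pfaffianFour (sus R 2 v w * Jmat R 2) = -(v ⬝ᵥ w) := by
  rw [sus_two_mul_Jmat]
  calc _
      = v 0 * -w 0 - v 2 * w 2 + -v 1 * w 1 := rfl
    _ = -(v ⬝ᵥ w) := by rw [dotProduct, Fin.sum_univ_three]; ring

lemma isAlt_toBilin'_sus_two_mul_Jmat (v w : Fin 3 → R) :
    (toBilin' (sus R 2 v w * Jmat R 2)).IsAlt := by
  rw [sus_two_mul_Jmat, isAlt_toBilin'_iff]
  constructor
  · ext i j
    fin_cases i <;> fin_cases j <;> simp
  · intro i
    fin_cases i <;> rfl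

lemma exists_sus_two_mul_Jmat_eq {A : Matrix (Fin 4) (Fin 4) R} (hA : (toBilin' A).IsAlt) :
    ∃ v w : Fin 3 → R, sus R 2 v w * Jmat R 2 = A := by
  obtain ⟨hskew, hdiag⟩ := isAlt_toBilin'_iff.mp hA
  have hswap (i j : Fin 4) : A j i = -A i j := congrFun₂ hskew i j
  refine ⟨![A 0 1, -A 0 3, A 0 2], ![-A 2 3, A 1 2, A 1 3], ?_⟩
  rw [sus_two_mul_Jmat]
  ext i j
  fin_cases i <;> fin_cases j <;>
    simp [hdiag, hswap 0 1, hswap 0 2, hswap 0 3, hswap 1 2, hswap 1 3, hswap 2 3]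

lemma mem_SuslinSet_two_iff {S : Matrix (Fin (2 ^ 2)) (Fin (2 ^ 2)) R} :
    S ∈ SuslinSet R 2 ↔ (toBilin' (S * Jmat R 2)).IsAlt := by
  constructor
  · rintro ⟨v, w, rfl⟩
    exact isAlt_toBilin'_sus_two_mul_Jmat v w
  · intro hS
    obtain ⟨v, w, h⟩ := exists_sus_two_mul_Jmat_eq hS
    exact ⟨v, w, (isUnit_Jmat 2).mul_right_cancel h.symm⟩

lemma mul_mul_invol_mem_SuslinSet_two {S : Matrix (Fin (2 ^ 2)) (Fin (2 ^ 2)) R}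
    (hS : S ∈ SuslinSet R 2) (g : Matrix (Fin (2 ^ 2)) (Fin (2 ^ 2)) R) :
    g * S * invol R 2 g ∈ SuslinSet R 2 := by
  rw [mem_SuslinSet_two_iff, mul_mul_invol_mul_Jmat]
  exact isAlt_toBilin'_mul_mul_transpose (mem_SuslinSet_two_iff.mp hS) g

lemma dotProduct_eq_det_mul_of_mul_sus_two_mul_invol_eq {g : Matrix (Fin (2 ^ 2)) (Fin (2 ^ 2)) R}
    {v w v' w' : Fin 3 → R} (h : g * sus R 2 v w * invol R 2 g = sus R 2 v' w') :
    v' ⬝ᵥ w' = g.det * (v ⬝ᵥ w) := by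
  apply neg_injective
  calc -(v' ⬝ᵥ w')
      = pfaffianFour (g * (sus R 2 v w * Jmat R 2) * gᵀ) := by
        rw [← mul_mul_invol_mul_Jmat, h, pfaffianFour_sus_two_mul_Jmat]
    _ = g.det * pfaffianFour (sus R 2 v w * Jmat R 2) :=
        pfaffianFour_mul_mul_transpose (isAlt_toBilin'_sus_two_mul_Jmat v w) g
    _ = -(g.det * (v ⬝ᵥ w)) := by rw [pfaffianFour_sus_two_mul_Jmat, mul_neg]

lemma mem_GSet_two_iff {g : Matrix (Fin (2 ^ 2)) (Fin (2 ^ 2)) R} :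
    g ∈ GSet R 2 ↔ IsUnit g :=
  ⟨And.left, fun hg ↦ ⟨hg, fun _ hS ↦ mul_mul_invol_mem_SuslinSet_two hS g⟩⟩

end Suslin

/-- `SG_2(R) = SL_4(R)`: a matrix `g ∈ GL_4(R)` satisfies
(i) `g·S·g*` is a Suslin matrix for every Suslin matrix `S ∈ M_4(R)` and
(ii) `l(g·S·g*) = l(S)` for every Suslin matrix `S`, iff `det g = 1`.
Consequently `Spin_6(R) ≅ SL_4(R)`. -/
theorem SG_two_eq_SL_four (R : Type) [CommRing R]
    (g : Matrix (Fin (2 ^ 2)) (Fin (2 ^ 2)) R) :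
    g ∈ SGSet R 2 ↔ g.det = 1 := by
  constructor
  · rintro ⟨⟨-, hmem⟩, hlength⟩
    let e : Fin 3 → R := Pi.single 0 1
    have he : e ⬝ᵥ e = 1 := by simp [e]
    obtain ⟨v, w, h⟩ := hmem (sus R 2 e e) ⟨e, e, rfl⟩
    calc g.det
        = g.det * (e ⬝ᵥ e) := by rw [he, mul_one]
      _ = v ⬝ᵥ w := (dotProduct_eq_det_mul_of_mul_sus_two_mul_invol_eq h).symm
      _ = 1 := (hlength e e v w h).trans he
  · intro hdet
    have hunit : IsUnit g := g.isUnit_iff_isUnit_det.mpr (hdet ▸ isUnit_one)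
    refine ⟨mem_GSet_two_iff.mpr hunit, fun v w v' w' h ↦ ?_⟩
    rw [dotProduct_eq_det_mul_of_mul_sus_two_mul_invol_eq h, hdet, one_mul]
end
end

section
/- Let R be a commutative ring in which 2 is not a zero divisor. Then a matrix M ∈ M_4(R) is a Suslin matrix (i.e. M = S_2(v,w) for some v, w ∈ R³) if and only if M* = M, where M* = J_2·Mᵀ·J_2ᵀ. -/
open Matrix

noncomputable section

/-!
Cut `M` into `2 × 2` blocks `A, B, C, D`. For `n` odd, `M ↦ M*` on matrices of size `2 ^ (n + 1)`
sends these blocks to `A*, -C*, -B*, D*`, so that `M* = M` means `A* = A`, `D* = D` and `C = -B*`.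
On the other hand `S_n(v, w)* = S̄_n(v, w)` for `n` odd, so that `M` is a Suslin matrix exactly when
`A` and `D` are scalar, `B` is a Suslin matrix and `C = -B*`. For `n = 1` the two conditions agree:
every `2 × 2` matrix is a Suslin matrix, and there `*` is the adjugate, which fixes only the scalar
matrices when `2` is not a zero divisor.
-/

section Blocks

variable {R : Type*} {n : ℕ}

/-- The matrix of size `2 ^ (n + 1)` with blocks `[[A, B], [C, D]]` of size `2 ^ n`, indexed as in
the recursive definitions of `sus` and `Jmat`. -/
def pow2Blocks (A B C D : Matrix (Fin (2 ^ n)) (Fin (2 ^ n)) R) :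
    Matrix (Fin (2 ^ (n + 1))) (Fin (2 ^ (n + 1))) R :=
  reindex (pow2Equiv n) (pow2Equiv n) (fromBlocks A B C D)

theorem exists_eq_pow2Blocks (M : Matrix (Fin (2 ^ (n + 1))) (Fin (2 ^ (n + 1))) R) :
    ∃ A B C D : Matrix (Fin (2 ^ n)) (Fin (2 ^ n)) R, M = pow2Blocks A B C D := by
  obtain ⟨N, rfl⟩ := (reindex (pow2Equiv n) (pow2Equiv n)).surjective M
  exact ⟨_, _, _, _, congrArg _ (fromBlocks_toBlocks N).symm⟩

variable {A B C D A' B' C' D' : Matrix (Fin (2 ^ n)) (Fin (2 ^ n)) R}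

theorem pow2Blocks_inj :
    pow2Blocks A B C D = pow2Blocks A' B' C' D' ↔ A = A' ∧ B = B' ∧ C = C' ∧ D = D' :=
  (reindex _ _).injective.eq_iff.trans fromBlocks_inj

theorem pow2Blocks_transpose : (pow2Blocks A B C D)ᵀ = pow2Blocks Aᵀ Cᵀ Bᵀ Dᵀ := by
  simp only [pow2Blocks, transpose_reindex, fromBlocks_transpose]

theorem pow2Blocks_mul [NonUnitalNonAssocSemiring R] :
    pow2Blocks A B C D * pow2Blocks A' B' C' D' =
      pow2Blocks (A * A' + B * C') (A * B' + B * D') (C * A' + D * C') (C * B' + D * D') := by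
  simp only [pow2Blocks, reindex_apply, submatrix_mul_equiv, fromBlocks_multiply]

theorem pow2Blocks_smul_one [Semiring R] (a : R) :
    (pow2Blocks (a • 1) 0 0 (a • 1) : Matrix (Fin (2 ^ (n + 1))) (Fin (2 ^ (n + 1))) R) =
      a • 1 := by
  have h := fromBlocks_smul a (1 : Matrix (Fin (2 ^ n)) (Fin (2 ^ n)) R) 0 0
    (1 : Matrix (Fin (2 ^ n)) (Fin (2 ^ n)) R)
  rw [smul_zero, fromBlocks_one] at h
  simp [pow2Blocks, ← h, submatrix_smul]

end Blocks

section Involution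

variable {R : Type} [CommRing R] {n : ℕ}

theorem Jmat_succ_of_odd (hn : Odd n) :
    Jmat R (n + 1) = pow2Blocks (Jmat R n) 0 0 (-Jmat R n) := by
  rw [Jmat, if_pos hn.add_one, pow2Blocks]

theorem Jmat_succ_of_even (hn : Even n) :
    Jmat R (n + 1) = pow2Blocks 0 (Jmat R n) (-Jmat R n) 0 := by
  rw [Jmat, if_neg (Nat.not_even_iff_odd.2 hn.add_one), pow2Blocks]

theorem invol_neg (M : Matrix (Fin (2 ^ n)) (Fin (2 ^ n)) R) :
    invol R n (-M) = -invol R n M := by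
  simp [invol]

theorem invol_transpose (M : Matrix (Fin (2 ^ n)) (Fin (2 ^ n)) R) :
    invol R n Mᵀ = (invol R n M)ᵀ := by
  simp [invol, Matrix.mul_assoc]

theorem invol_pow2Blocks_of_odd (hn : Odd n) (A B C D : Matrix (Fin (2 ^ n)) (Fin (2 ^ n)) R) :
    invol R (n + 1) (pow2Blocks A B C D) =
      pow2Blocks (invol R n A) (-invol R n C) (-invol R n B) (invol R n D) := by
  simp [invol, Jmat_succ_of_odd hn, pow2Blocks_transpose, pow2Blocks_mul]

theorem invol_pow2Blocks_of_even (hn : Even n) (A B C D : Matrix (Fin (2 ^ n)) (Fin (2 ^ n)) R) :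
    invol R (n + 1) (pow2Blocks A B C D) =
      pow2Blocks (invol R n D) (-invol R n B) (-invol R n C) (invol R n A) := by
  simp [invol, Jmat_succ_of_even hn, pow2Blocks_transpose, pow2Blocks_mul]

theorem invol_smul_one (n : ℕ) (a : R) : invol R n (a • 1) = a • 1 := by
  induction n with
  | zero => simp [invol, Jmat]
  | succ n ih =>
    have invol_zero : invol R n 0 = 0 := by simp [invol]
    rw [← pow2Blocks_smul_one]
    rcases n.even_or_odd with hn | hn
    · rw [invol_pow2Blocks_of_even hn, ih, invol_zero, neg_zero]
    · rw [invol_pow2Blocks_of_odd hn, ih, invol_zero, neg_zero]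

theorem invol_invol (M : Matrix (Fin (2 ^ n)) (Fin (2 ^ n)) R) :
    invol R n (invol R n M) = M := by
  induction n with
  | zero => simp [invol, Jmat]
  | succ n ih =>
    obtain ⟨A, B, C, D, rfl⟩ := exists_eq_pow2Blocks M
    rcases n.even_or_odd with hn | hn
    · simp only [invol_pow2Blocks_of_even hn, invol_neg, neg_neg, ih]
    · simp only [invol_pow2Blocks_of_odd hn, invol_neg, neg_neg, ih]

theorem invol_pow2Blocks_eq_self_iff_of_odd (hn : Odd n)
    {A B C D : Matrix (Fin (2 ^ n)) (Fin (2 ^ n)) R} :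
    invol R (n + 1) (pow2Blocks A B C D) = pow2Blocks A B C D ↔
      invol R n A = A ∧ invol R n D = D ∧ C = -invol R n B := by
  rw [invol_pow2Blocks_of_odd hn, pow2Blocks_inj]
  constructor
  · rintro ⟨hA, -, hC, hD⟩
    exact ⟨hA, hD, hC.symm⟩
  · rintro ⟨hA, hD, rfl⟩
    exact ⟨hA, by rw [invol_neg, invol_invol, neg_neg], rfl, hD⟩

end Involution

section Suslin

variable {R : Type} [CommRing R] {n : ℕ}

theorem sus_zero (v w : Fin 1 → R) : sus R 0 v w = v 0 • 1 :=
  rfl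

theorem sus_succ (v w : Fin (n + 2) → R) :
    sus R (n + 1) v w =
      pow2Blocks (v 0 • 1) (sus R n (v ∘ Fin.succ) (w ∘ Fin.succ))
        (-susBar R n (v ∘ Fin.succ) (w ∘ Fin.succ)) (w 0 • 1) :=
  rfl

theorem susBar_succ (v w : Fin (n + 2) → R) :
    susBar R (n + 1) v w =
      pow2Blocks (w 0 • 1) (-sus R n (v ∘ Fin.succ) (w ∘ Fin.succ))
        (susBar R n (v ∘ Fin.succ) (w ∘ Fin.succ)) (v 0 • 1) := by
  simp [susBar, sus_succ, pow2Blocks_transpose]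

theorem invol_sus (n : ℕ) (v w : Fin (n + 1) → R) :
    invol R n (sus R n v w) = if Even n then sus R n v w else susBar R n v w := by
  induction n with
  | zero => rw [if_pos Even.zero, sus_zero, invol_smul_one]
  | succ n ih =>
    rcases n.even_or_odd with hn | hn
    · have invol_susBar (v w : Fin (n + 1) → R) : invol R n (susBar R n v w) = susBar R n v w := by
        rw [susBar, invol_transpose, ih, if_pos hn]
      rw [if_neg (Nat.not_even_iff_odd.2 hn.add_one), sus_succ, invol_pow2Blocks_of_even hn,
        invol_neg, neg_neg, invol_susBar, ih, if_pos hn, invol_smul_one, invol_smul_one,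
        susBar_succ]
    · have invol_sus_eq (v w : Fin (n + 1) → R) : invol R n (sus R n v w) = susBar R n v w := by
        rw [ih, if_neg (Nat.not_even_iff_odd.2 hn)]
      rw [if_pos hn.add_one, sus_succ, invol_pow2Blocks_eq_self_iff_of_odd hn, invol_sus_eq]
      exact ⟨invol_smul_one n _, invol_smul_one n _, rfl⟩

theorem invol_sus_of_odd (hn : Odd n) (v w : Fin (n + 1) → R) :
    invol R n (sus R n v w) = susBar R n v w := by
  rw [invol_sus, if_neg (Nat.not_even_iff_odd.2 hn)]

theorem exists_pow2Blocks_eq_sus_iff_of_odd (hn : Odd n)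
    {A B C D : Matrix (Fin (2 ^ n)) (Fin (2 ^ n)) R} :
    (∃ v w, pow2Blocks A B C D = sus R (n + 1) v w) ↔
      (∃ a : R, A = a • 1) ∧ (∃ d : R, D = d • 1) ∧ (∃ v w, B = sus R n v w) ∧
        C = -invol R n B := by
  constructor
  · rintro ⟨v, w, h⟩
    obtain ⟨rfl, rfl, rfl, rfl⟩ := pow2Blocks_inj.1 h
    exact ⟨⟨_, rfl⟩, ⟨_, rfl⟩, ⟨_, _, rfl⟩, by rw [invol_sus_of_odd hn, susBar]⟩
  · rintro ⟨⟨a, rfl⟩, ⟨d, rfl⟩, ⟨v, w, rfl⟩, rfl⟩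
    exact ⟨Fin.cons a v, Fin.cons d w, by rw [invol_sus_of_odd hn]; rfl⟩

end Suslin

theorem matrix_eq_zero_of_neg_eq_self {R m n : Type*} [NonAssocRing R]
    (h2 : ∀ r : R, 2 * r = 0 → r = 0) {A : Matrix m n R} (hA : -A = A) : A = 0 := by
  ext i j
  have hij : -A i j = A i j := congrFun₂ hA i j
  exact h2 _ ((two_mul _).trans (neg_eq_iff_add_eq_zero.1 hij))

section SizeTwo

variable {R : Type} [CommRing R]

theorem exists_eq_smul_one_of_size_one (A : Matrix (Fin (2 ^ 0)) (Fin (2 ^ 0)) R) :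
    ∃ a : R, A = a • 1 := by
  refine ⟨A 0 0, ?_⟩
  change Matrix (Fin 1) (Fin 1) R at A
  ext i j
  rw [Subsingleton.elim i 0, Subsingleton.elim j 0]
  simp

theorem exists_eq_sus_one (B : Matrix (Fin (2 ^ 1)) (Fin (2 ^ 1)) R) :
    ∃ v w, B = sus R 1 v w := by
  obtain ⟨A, B, C, D, rfl⟩ := exists_eq_pow2Blocks (n := 0) B
  obtain ⟨a, rfl⟩ := exists_eq_smul_one_of_size_one A
  obtain ⟨b, rfl⟩ := exists_eq_smul_one_of_size_one B
  obtain ⟨c, rfl⟩ := exists_eq_smul_one_of_size_one C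
  obtain ⟨d, rfl⟩ := exists_eq_smul_one_of_size_one D
  exact ⟨![a, b], ![d, -c], by simp [sus_succ (n := 0), susBar, sus_zero]⟩

theorem invol_one_eq_self_iff (h2 : ∀ r : R, 2 * r = 0 → r = 0)
    {A : Matrix (Fin (2 ^ 1)) (Fin (2 ^ 1)) R} :
    invol R 1 A = A ↔ ∃ a : R, A = a • 1 := by
  constructor
  · intro h
    obtain ⟨A, B, C, D, rfl⟩ := exists_eq_pow2Blocks (n := 0) A
    obtain ⟨a, rfl⟩ := exists_eq_smul_one_of_size_one A
    have invol_eq_self (X : Matrix (Fin (2 ^ 0)) (Fin (2 ^ 0)) R) : invol R 0 X = X := by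
      obtain ⟨x, rfl⟩ := exists_eq_smul_one_of_size_one X
      exact invol_smul_one 0 x
    simp only [invol_pow2Blocks_of_even Even.zero, invol_eq_self, pow2Blocks_inj] at h
    obtain ⟨rfl, hB, hC, -⟩ := h
    rw [matrix_eq_zero_of_neg_eq_self h2 hB, matrix_eq_zero_of_neg_eq_self h2 hC]
    exact ⟨a, pow2Blocks_smul_one a⟩
  · rintro ⟨a, rfl⟩
    exact invol_smul_one 1 a

end SizeTwo

/-- if `2` is not a zero divisor in `R`, then `M ∈ M_4(R)` is a Suslin matrix
iff `M* = M`. -/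
theorem suslin_iff_selfadjoint (R : Type) [CommRing R]
    (h2 : ∀ r : R, 2 * r = 0 → r = 0)
    (M : Matrix (Fin (2 ^ 2)) (Fin (2 ^ 2)) R) :
    (∃ v w : Fin 3 → R, M = sus R 2 v w) ↔ invol R 2 M = M := by
  obtain ⟨A, B, C, D, rfl⟩ := exists_eq_pow2Blocks (n := 1) M
  calc
    _ ↔ (∃ a : R, A = a • 1) ∧ (∃ d : R, D = d • 1) ∧ (∃ v w, B = sus R 1 v w) ∧
        C = -invol R 1 B := exists_pow2Blocks_eq_sus_iff_of_odd odd_one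
    _ ↔ invol R 1 A = A ∧ invol R 1 D = D ∧ C = -invol R 1 B := by
      simp only [invol_one_eq_self_iff h2, exists_eq_sus_one B, true_and]
    _ ↔ _ := (invol_pow2Blocks_eq_self_iff_of_odd odd_one).symm
end
end
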